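/- Let (g_m)_{m≥1} be probability densities on [0,1], let (η_m)_{m≥1} be fixed signs with η_m ∈ {−1, +1}, and let h_M denote the density of η_1 Y_1 + ··· + η_M Y_M modulo 1, where the Y_m are independent random variables with densities g_m (if Y has density g(y) then −Y modulo 1 has density g(1−y)). Then h_M converges in L¹([0,1]) to the constant function 1 as M → ∞ if and only if for every integer n ≠ 0 one has lim_{M→∞} ĝ_1(n)···ĝ_M(n) = 0. -/

import Mathlib

open MeasureTheory Filter

noncomputable section

/-- A probability density on `[0,1]`: nonnegative, integrable, total integral one. -/
def IsProbDensity (g : ℝ → ℝ) : Prop :=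
  (∀ x, 0 ≤ g x) ∧ IntegrableOn g (Set.Icc 0 1) ∧ (∫ x in (0:ℝ)..1, g x) = 1

/-- Circular convolution on `[0,1]` (the argument is taken modulo 1). -/
def circConv (f g : ℝ → ℝ) : ℝ → ℝ :=
  fun x => ∫ y in (0:ℝ)..1, f y * g (Int.fract (x - y))

/-- The `n`-th Fourier coefficient of `g ∈ L¹([0,1])`. -/
def fourierCoeff01 (g : ℝ → ℝ) (n : ℤ) : ℂ :=
  ∫ x in (0:ℝ)..1, (g x : ℂ) * Complex.exp (-(2 * Real.pi * Complex.I) * n * x)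

/-!
Work on the circle, where `circConv` is a genuine convolution. Let `G_M` be the density of `η_M Y_M`
modulo 1 and `F_M = h_M - 1`. Since `G_{M+1}` has mass one, `F_{M+1} = F_M ⋆ G_{M+1}`; the zeroth
Fourier coefficient of `F_M` vanishes and the others are the products of those of `G_1, …, G_M`.
Reflecting a density conjugates its coefficients, so the signs do not affect the moduli of these
products.

If the products tend to zero, choose a trigonometric polynomial `k` with `k ⋆ F_1` close to `F_1`
in `L¹`. Convolution with a density does not increase the `L¹` norm, so `k ⋆ F_M` stays as close to
`F_M` for every `M`; and `k ⋆ F_M → 0`, being a combination of finitely many characters whose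
weights are multiples of coefficients of `F_M`. Conversely, Fourier coefficients are bounded by the
`L¹` norm.
-/

theorem integral_norm_sub_le_add {α E : Type*} [MeasurableSpace α] {μ : Measure α}
    [NormedAddCommGroup E] {f g k : α → E} (hf : Integrable f μ) (hg : Integrable g μ)
    (hk : Integrable k μ) :
    ∫ x, ‖f x - k x‖ ∂μ ≤ ∫ x, ‖f x - g x‖ ∂μ + ∫ x, ‖g x - k x‖ ∂μ :=
  calc ∫ x, ‖f x - k x‖ ∂μ
    _ ≤ ∫ x, (‖f x - g x‖ + ‖g x - k x‖) ∂μ :=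
      integral_mono (hf.sub hk).norm ((hf.sub hg).norm.add (hg.sub hk).norm)
        fun _ => norm_sub_le_norm_sub_add_norm_sub _ _ _
    _ = ∫ x, ‖f x - g x‖ ∂μ + ∫ x, ‖g x - k x‖ ∂μ :=
      integral_add (hf.sub hg).norm (hg.sub hk).norm

section Convolution

open ContinuousLinearMap Topology
open scoped Convolution

section Group

variable {𝕜 G E E' F : Type*} [NontriviallyNormedField 𝕜]
  [NormedAddCommGroup E] [NormedSpace 𝕜 E] [NormedAddCommGroup E'] [NormedSpace 𝕜 E']
  [NormedAddCommGroup F] [NormedSpace 𝕜 F] [NormedSpace ℝ F]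
  [AddGroup G] [MeasurableSpace G] [MeasurableAdd₂ G] [MeasurableNeg G]
  {μ : Measure G} [SFinite μ] [μ.IsAddRightInvariant] (L : E →L[𝕜] E' →L[𝕜] F)

theorem sub_convolution_ae_eq {f f' : G → E} {g : G → E'}
    (hf : Integrable f μ) (hf' : Integrable f' μ) (hg : Integrable g μ) :
    (f - f') ⋆[L, μ] g =ᵐ[μ] f ⋆[L, μ] g - f' ⋆[L, μ] g := by
  filter_upwards [hf.ae_convolution_exists L hg, hf'.ae_convolution_exists L hg] with x hx hx'
  simp only [convolution_def, Pi.sub_apply, L.map_sub₂]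
  exact integral_sub hx hx'

theorem convolution_sub_ae_eq {f : G → E} {g g' : G → E'}
    (hf : Integrable f μ) (hg : Integrable g μ) (hg' : Integrable g' μ) :
    f ⋆[L, μ] (g - g') =ᵐ[μ] f ⋆[L, μ] g - f ⋆[L, μ] g' := by
  filter_upwards [hf.ae_convolution_exists L hg, hf.ae_convolution_exists L hg'] with x hx hx'
  simp only [convolution_def, Pi.sub_apply, map_sub]
  exact integral_sub hx hx'

theorem integral_norm_convolution_le {f : G → E} {g : G → E'} (hf : Integrable f μ)
    (hg : Integrable g μ) :
    ∫ x, ‖(f ⋆[L, μ] g) x‖ ∂μ ≤ ‖L‖ * ((∫ x, ‖f x‖ ∂μ) * ∫ x, ‖g x‖ ∂μ) := by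
  have h_pointwise : ∀ᵐ x ∂μ,
      ‖(f ⋆[L, μ] g) x‖ ≤ ‖L‖ * ((‖f ·‖) ⋆[mul ℝ ℝ, μ] (‖g ·‖)) x := by
    filter_upwards [hf.norm.ae_convolution_exists (mul ℝ ℝ) hg.norm] with x hx
    rw [convolution_def, convolution_def, ← integral_const_mul]
    refine norm_integral_le_of_norm_le (hx.const_mul _) (.of_forall fun t => ?_)
    simpa [mul_assoc] using L.le_opNorm₂ (f t) (g (x - t))
  calc ∫ x, ‖(f ⋆[L, μ] g) x‖ ∂μ
    _ ≤ ∫ x, ‖L‖ * ((‖f ·‖) ⋆[mul ℝ ℝ, μ] (‖g ·‖)) x ∂μ :=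
      integral_mono_of_nonneg (.of_forall fun x => norm_nonneg _)
        ((hf.norm.integrable_convolution _ hg.norm).const_mul _) h_pointwise
    _ = ‖L‖ * ((∫ x, ‖f x‖ ∂μ) * ∫ x, ‖g x‖ ∂μ) := by
      rw [integral_const_mul, integral_convolution _ hf.norm hg.norm, mul_apply']

theorem integrable_of_succ_ae_eq_convolution {L : F →L[𝕜] E' →L[𝕜] F} {u : ℕ → G → F}
    {v : ℕ → G → E'} (hu : Integrable (u 0) μ) (hv : ∀ m, Integrable (v m) μ)
    (h_rec : ∀ m, u (m + 1) =ᵐ[μ] u m ⋆[L, μ] v m) (m : ℕ) : Integrable (u m) μ := by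
  induction m with
  | zero => exact hu
  | succ m ih => exact (ih.integrable_convolution _ (hv m)).congr (h_rec m).symm

end Group

theorem integral_norm_lsmul_convolution_le {𝕜 G E : Type*} [NontriviallyNormedField 𝕜]
    [NormedAddCommGroup E] [NormedSpace 𝕜 E] [NormedSpace ℝ E]
    [AddGroup G] [MeasurableSpace G] [MeasurableAdd₂ G] [MeasurableNeg G]
    {μ : Measure G} [SFinite μ] [μ.IsAddRightInvariant] {f : G → 𝕜} {g : G → E}
    (hf : Integrable f μ) (hg : Integrable g μ) :
    ∫ x, ‖(f ⋆[lsmul 𝕜 𝕜, μ] g) x‖ ∂μ ≤ (∫ x, ‖f x‖ ∂μ) * ∫ x, ‖g x‖ ∂μ :=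
  (integral_norm_convolution_le _ hf hg).trans <|
    mul_le_of_le_one_left (by positivity) opNorm_lsmul_le

theorem one_lsmul_convolution {𝕜 G E : Type*} [NontriviallyNormedField 𝕜]
    [NormedAddCommGroup E] [NormedSpace 𝕜 E] [NormedSpace ℝ E]
    [AddGroup G] [MeasurableSpace G] [MeasurableAdd G] [MeasurableNeg G]
    {μ : Measure G} [μ.IsNegInvariant] [μ.IsAddLeftInvariant] (g : G → E) :
    (1 : G → 𝕜) ⋆[lsmul 𝕜 𝕜, μ] g = fun _ => ∫ x, g x ∂μ := by
  ext x
  simp [convolution_def, integral_sub_left_eq_self g μ x]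

section CompactSpace

variable {X E : Type*} [TopologicalSpace X] [CompactSpace X] [MeasurableSpace X]
  [OpensMeasurableSpace X] [NormedAddCommGroup E] {μ : Measure X}

theorem integrable_continuousMap [IsFiniteMeasureOnCompacts μ] (f : C(X, E)) : Integrable f μ :=
  f.continuous.integrable_of_hasCompactSupport (.of_compactSpace f)

theorem integral_norm_continuousMap_le [IsProbabilityMeasure μ] (f : C(X, E)) :
    ∫ x, ‖f x‖ ∂μ ≤ ‖f‖ := by
  simpa using integral_mono (integrable_continuousMap (μ := μ) f).norm (integrable_const ‖f‖)
    f.norm_coe_le_norm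

end CompactSpace

section CompactGroup

variable {G E : Type*} [NormedAddCommGroup G] [CompactSpace G] [MeasurableSpace G] [BorelSpace G]
  [NormedAddCommGroup E] (μ : Measure G)

theorem exists_continuous_nonneg_support_subset_ball_integral_eq_one
    [IsFiniteMeasure μ] [μ.IsOpenPosMeasure] {R : ℝ} (hR : 0 < R) :
    ∃ φ : C(G, ℝ), (∀ x, 0 ≤ φ x) ∧ Function.support φ ⊆ Metric.ball 0 R ∧ ∫ x, φ x ∂μ = 1 := by
  let ψ : C(G, ℝ) := ⟨fun x => max 0 (R - ‖x‖), by fun_prop⟩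
  have hψ : 0 < ∫ x, ψ x ∂μ :=
    ψ.continuous.integral_pos_of_hasCompactSupport_nonneg_nonzero (x := 0) (.of_compactSpace ψ)
      (fun x => le_max_left _ _) (by simp [ψ, hR.le, hR.ne'])
  refine ⟨(∫ x, ψ x ∂μ)⁻¹ • ψ, fun x => ?_, fun x hx => ?_, ?_⟩
  · exact mul_nonneg (inv_nonneg.2 hψ.le) (le_max_left _ _)
  · contrapose! hx
    have : R ≤ ‖x‖ := by simpa using hx
    simp [ψ, this]
  · simp [integral_const_mul, hψ.ne']

variable [NormedSpace ℝ E] [CompleteSpace E] [μ.IsAddHaarMeasure] {ε : ℝ}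

theorem exists_forall_norm_convolution_sub_le (u : C(G, E)) (hε : 0 < ε) :
    ∃ φ : C(G, ℝ), (∀ x, 0 ≤ φ x) ∧ ∫ x, φ x ∂μ = 1 ∧
      ∀ x, ‖(φ ⋆[lsmul ℝ ℝ, μ] u) x - u x‖ ≤ ε := by
  obtain ⟨R, hR, hu⟩ := Metric.uniformContinuous_iff_le.1
    (CompactSpace.uniformContinuous_of_continuous u.continuous) ε hε
  obtain ⟨φ, hφ, hφR, hφ1⟩ := exists_continuous_nonneg_support_subset_ball_integral_eq_one μ hR
  refine ⟨φ, hφ, hφ1, fun x => ?_⟩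
  rw [← dist_eq_norm]
  exact dist_convolution_le hε.le hφR hφ hφ1 (integrable_continuousMap u).aestronglyMeasurable
    fun y hy => hu (Metric.mem_ball.1 hy).le

theorem exists_integral_norm_sub_convolution_le [IsProbabilityMeasure μ] {f : G → E}
    (hf : Integrable f μ) (hε : 0 < ε) :
    ∃ φ : C(G, ℝ), ∫ x, ‖f x - (φ ⋆[lsmul ℝ ℝ, μ] f) x‖ ∂μ ≤ ε := by
  obtain ⟨u, -, hfu, hu_cont, hu⟩ := hf.exists_hasCompactSupport_integral_sub_le
    (show 0 < ε / 3 by positivity)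
  obtain ⟨φ, hφ, hφ1, hφu⟩ := exists_forall_norm_convolution_sub_le μ ⟨u, hu_cont⟩
    (show 0 < ε / 3 by positivity)
  have hφi : Integrable φ μ := integrable_continuousMap φ
  have hφu_int := hφi.integrable_convolution (lsmul ℝ ℝ) hu
  have hφf_int := hφi.integrable_convolution (lsmul ℝ ℝ) hf
  have h_smooth : ∫ x, ‖u x - (φ ⋆[lsmul ℝ ℝ, μ] u) x‖ ∂μ ≤ ε / 3 := by
    simpa using integral_mono (hu.sub hφu_int).norm (integrable_const (ε / 3))
      fun x => (norm_sub_rev _ _).trans_le (hφu x)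
  have h_contract : ∫ x, ‖(φ ⋆[lsmul ℝ ℝ, μ] u) x - (φ ⋆[lsmul ℝ ℝ, μ] f) x‖ ∂μ ≤ ε / 3 :=
    calc ∫ x, ‖(φ ⋆[lsmul ℝ ℝ, μ] u) x - (φ ⋆[lsmul ℝ ℝ, μ] f) x‖ ∂μ
      _ = ∫ x, ‖(φ ⋆[lsmul ℝ ℝ, μ] (u - f)) x‖ ∂μ :=
        integral_congr_ae ((convolution_sub_ae_eq _ hφi hu hf).symm.fun_comp norm)
      _ ≤ (∫ x, ‖φ x‖ ∂μ) * ∫ x, ‖(u - f) x‖ ∂μ :=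
        integral_norm_lsmul_convolution_le hφi (hu.sub hf)
      _ ≤ ε / 3 := by
        simpa [Real.norm_of_nonneg (hφ _), hφ1, norm_sub_rev (u _)] using hfu
  exact ⟨φ, by linarith [integral_norm_sub_le_add hf hu hφf_int,
    integral_norm_sub_le_add hu hφu_int hφf_int]⟩

end CompactGroup

section CompactGroupRCLike

variable {𝕜 G E : Type*} [RCLike 𝕜] [NormedAddCommGroup G] [CompactSpace G] [MeasurableSpace G]
  [BorelSpace G] [NormedAddCommGroup E] [NormedSpace ℝ E] [NormedSpace 𝕜 E]
  {μ : Measure G} [μ.IsAddHaarMeasure]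

theorem lsmul_convolution_assoc [CompleteSpace E] (k : C(G, 𝕜)) {f : G → 𝕜} {g : G → E}
    (hf : Integrable f μ) (hg : Integrable g μ) :
    (k ⋆[lsmul 𝕜 𝕜, μ] f) ⋆[lsmul 𝕜 𝕜, μ] g =
      k ⋆[lsmul 𝕜 𝕜, μ] (f ⋆[lsmul 𝕜 𝕜, μ] g) := by
  ext x
  have hfg := hf.norm.integrable_convolution (mul ℝ ℝ) hg.norm
  refine convolution_assoc _ _ _ _ (fun a b v => mul_smul a b v)
    (integrable_continuousMap k).aestronglyMeasurable hf.aestronglyMeasurable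
    hg.aestronglyMeasurable ((integrable_continuousMap k).ae_convolution_exists _ hf)
    (hf.norm.ae_convolution_exists _ hg.norm) ?_
  exact HasCompactSupport.convolutionExists_left _ (.of_compactSpace _) k.continuous.norm
    hfg.locallyIntegrable x

theorem integral_norm_convolution_sub_convolution_le [CompleteSpace E]
    (k : C(G, 𝕜)) {f : G → 𝕜} {g : G → E} (hf : Integrable f μ) (hg : Integrable g μ) :
    ∫ x, ‖(f ⋆[lsmul 𝕜 𝕜, μ] g) x - (k ⋆[lsmul 𝕜 𝕜, μ] (f ⋆[lsmul 𝕜 𝕜, μ] g)) x‖ ∂μ ≤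
      (∫ x, ‖f x - (k ⋆[lsmul 𝕜 𝕜, μ] f) x‖ ∂μ) * ∫ x, ‖g x‖ ∂μ := by
  have hkf := (integrable_continuousMap k).integrable_convolution (lsmul 𝕜 𝕜) hf
  rw [← lsmul_convolution_assoc k hf hg]
  calc ∫ x, ‖(f ⋆[lsmul 𝕜 𝕜, μ] g) x - ((k ⋆[lsmul 𝕜 𝕜, μ] f) ⋆[lsmul 𝕜 𝕜, μ] g) x‖ ∂μ
    _ = ∫ x, ‖((f - (k ⋆[lsmul 𝕜 𝕜, μ] f)) ⋆[lsmul 𝕜 𝕜, μ] g) x‖ ∂μ :=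
      integral_congr_ae ((sub_convolution_ae_eq _ hf hkf hg).symm.fun_comp norm)
    _ ≤ (∫ x, ‖f x - (k ⋆[lsmul 𝕜 𝕜, μ] f) x‖ ∂μ) * ∫ x, ‖g x‖ ∂μ :=
      integral_norm_lsmul_convolution_le (hf.sub hkf) hg

theorem exists_mem_integral_norm_sub_convolution_le [IsScalarTower ℝ 𝕜 E] [CompleteSpace E]
    [IsProbabilityMeasure μ] {S : Set C(G, 𝕜)} (hS : Dense S) {f : G → E} (hf : Integrable f μ)
    {ε : ℝ} (hε : 0 < ε) :
    ∃ k ∈ S, ∫ x, ‖f x - (k ⋆[lsmul 𝕜 𝕜, μ] f) x‖ ∂μ ≤ ε := by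
  obtain ⟨φ, hφ⟩ := exists_integral_norm_sub_convolution_le μ hf (half_pos hε)
  let ψ : C(G, 𝕜) := ⟨fun x => (φ x : 𝕜), by fun_prop⟩
  have hψ_conv : ψ ⋆[lsmul 𝕜 𝕜, μ] f = φ ⋆[lsmul ℝ ℝ, μ] f := by
    ext x
    simp [convolution_def, ψ]
  obtain ⟨δ, hδ, hδε⟩ := exists_pos_mul_lt (half_pos hε) (∫ x, ‖f x‖ ∂μ)
  obtain ⟨k, hkS, hk⟩ := hS.exists_dist_lt ψ hδ
  have hψ : Integrable ψ μ := integrable_continuousMap ψ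
  have hk' : Integrable k μ := integrable_continuousMap k
  have h_close : ∫ x, ‖(ψ ⋆[lsmul 𝕜 𝕜, μ] f) x - (k ⋆[lsmul 𝕜 𝕜, μ] f) x‖ ∂μ ≤ ε / 2 :=
    calc ∫ x, ‖(ψ ⋆[lsmul 𝕜 𝕜, μ] f) x - (k ⋆[lsmul 𝕜 𝕜, μ] f) x‖ ∂μ
      _ = ∫ x, ‖(⇑(ψ - k) ⋆[lsmul 𝕜 𝕜, μ] f) x‖ ∂μ :=
        integral_congr_ae ((sub_convolution_ae_eq _ hψ hk' hf).symm.fun_comp norm)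
      _ ≤ (∫ x, ‖(ψ - k) x‖ ∂μ) * ∫ x, ‖f x‖ ∂μ :=
        integral_norm_lsmul_convolution_le (hψ.sub hk') hf
      _ ≤ δ * ∫ x, ‖f x‖ ∂μ := by
        gcongr
        exact (integral_norm_continuousMap_le (ψ - k)).trans (dist_eq_norm ψ k ▸ hk.le)
      _ ≤ ε / 2 := mul_comm δ _ ▸ hδε.le
  rw [← hψ_conv] at hφ
  have h_triangle := integral_norm_sub_le_add hf (hψ.integrable_convolution (lsmul 𝕜 𝕜) hf)
    (hk'.integrable_convolution (lsmul 𝕜 𝕜) hf)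
  exact ⟨k, hkS, by linarith⟩

theorem antitone_integral_norm_sub_convolution {u v : ℕ → G → 𝕜} (hu : Integrable (u 0) μ)
    (hv : ∀ m, Integrable (v m) μ) (hv1 : ∀ m, ∫ x, ‖v m x‖ ∂μ ≤ 1)
    (h_rec : ∀ m, u (m + 1) =ᵐ[μ] u m ⋆[lsmul 𝕜 𝕜, μ] v m) (k : C(G, 𝕜)) :
    Antitone fun m => ∫ x, ‖u m x - (k ⋆[lsmul 𝕜 𝕜, μ] u m) x‖ ∂μ := by
  refine antitone_nat_of_succ_le fun m => ?_
  have hum := integrable_of_succ_ae_eq_convolution hu hv h_rec m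
  calc ∫ x, ‖u (m + 1) x - (k ⋆[lsmul 𝕜 𝕜, μ] u (m + 1)) x‖ ∂μ
    _ = ∫ x, ‖(u m ⋆[lsmul 𝕜 𝕜, μ] v m) x -
          (k ⋆[lsmul 𝕜 𝕜, μ] (u m ⋆[lsmul 𝕜 𝕜, μ] v m)) x‖ ∂μ := by
      rw [convolution_congr (lsmul 𝕜 𝕜) .rfl (h_rec m)]
      exact integral_congr_ae (((h_rec m).sub .rfl).fun_comp norm)
    _ ≤ (∫ x, ‖u m x - (k ⋆[lsmul 𝕜 𝕜, μ] u m) x‖ ∂μ) * ∫ x, ‖v m x‖ ∂μ :=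
      integral_norm_convolution_sub_convolution_le k hum (hv m)
    _ ≤ ∫ x, ‖u m x - (k ⋆[lsmul 𝕜 𝕜, μ] u m) x‖ ∂μ :=
      mul_le_of_le_one_right (by positivity) (hv1 m)

end CompactGroupRCLike

section Circle

open AddCircle

variable {T : ℝ}

theorem fourier_add_apply (n : ℤ) (x y : AddCircle T) :
    fourier n (x + y) = fourier n x * fourier n y := by
  simp [fourier_apply, smul_add, toCircle_add]

variable [Fact (0 < T)] {E : Type*} [NormedAddCommGroup E] [NormedSpace ℂ E]

theorem norm_fourierCoeff_le (f : AddCircle T → E) (n : ℤ) :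
    ‖fourierCoeff f n‖ ≤ ∫ x, ‖f x‖ ∂haarAddCircle := by
  refine (norm_integral_le_integral_norm _).trans_eq ?_
  simp only [fourier_apply, norm_smul, Circle.norm_coe, one_mul]

theorem fourierCoeff_zero (f : AddCircle T → E) : fourierCoeff f 0 = ∫ x, f x ∂haarAddCircle := by
  simp [fourierCoeff]

theorem fourierCoeff_one (n : ℤ) :
    fourierCoeff (1 : AddCircle T → ℂ) n = if n = 0 then 1 else 0 := by
  have h := congrFun (fourierCoeff_fourier (T := T) 0) n
  rw [Pi.single_apply] at h
  rw [← h]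
  congr 1
  ext x
  simp

theorem fourierCoeff_sub {f g : AddCircle T → E} (hf : Integrable f haarAddCircle)
    (hg : Integrable g haarAddCircle) (n : ℤ) :
    fourierCoeff (f - g) n = fourierCoeff f n - fourierCoeff g n := by
  have h := congrFun (fourierCoeff.add (hf.sub hg) hg) n
  rw [sub_add_cancel] at h
  rw [h, Pi.add_apply, add_sub_cancel_right]

theorem fourierCoeff_convolution [CompleteSpace E] {f : AddCircle T → ℂ} {g : AddCircle T → E}
    (hf : Integrable f haarAddCircle) (hg : Integrable g haarAddCircle) (n : ℤ) :
    fourierCoeff (f ⋆[lsmul ℂ ℂ, haarAddCircle] g) n = fourierCoeff f n • fourierCoeff g n := by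
  have h_twist : ∀ x, (fourier (-n) x : ℂ) • (f ⋆[lsmul ℂ ℂ, haarAddCircle] g) x =
      ((fun t => fourier (-n) t • f t) ⋆[lsmul ℂ ℂ, haarAddCircle]
        fun t => (fourier (-n) t : ℂ) • g t) x := fun x => by
    rw [convolution_def, convolution_def, ← integral_smul]
    congr! 2 with t
    have h_char := fourier_add_apply (-n) t (x - t)
    rw [add_sub_cancel] at h_char
    rw [h_char, lsmul_apply, lsmul_apply, smul_smul, smul_smul, smul_eq_mul, mul_right_comm]
  simp only [fourierCoeff, h_twist]
  exact integral_convolution _ (hf.fourier_smul (-n)) (hg.fourier_smul (-n))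

theorem fourier_convolution (n : ℤ) (f : AddCircle T → E) (x : AddCircle T) :
    (fourier n ⋆[lsmul ℂ ℂ, haarAddCircle] f) x = (fourier n x : ℂ) • fourierCoeff f n := by
  rw [convolution_eq_swap, fourierCoeff, ← integral_smul]
  congr! 2 with t
  rw [lsmul_apply, sub_eq_add_neg, fourier_add_apply, smul_smul]
  simp only [fourier_apply, smul_neg, neg_smul]

theorem dense_span_fourier :
    Dense (Submodule.span ℂ (Set.range (fourier (T := T))) : Set C(AddCircle T, ℂ)) :=
  Submodule.dense_iff_topologicalClosure_eq_top.2 span_fourier_closure_eq_top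

theorem tendsto_integral_norm_convolution_of_mem_span {ι : Type*} {l : Filter ι}
    {F : ι → AddCircle T → E} (hF : ∀ i, Integrable (F i) haarAddCircle)
    (h_coeff : ∀ n, Tendsto (fun i => fourierCoeff (F i) n) l (𝓝 0)) {k : C(AddCircle T, ℂ)}
    (hk : k ∈ Submodule.span ℂ (Set.range (fourier (T := T)))) :
    Tendsto (fun i => ∫ x, ‖(k ⋆[lsmul ℂ ℂ, haarAddCircle] F i) x‖ ∂haarAddCircle) l (𝓝 0) := by
  induction hk using Submodule.span_induction with
  | mem k hk =>
    obtain ⟨n, rfl⟩ := hk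
    simpa only [fourier_convolution, fourier_apply, norm_smul, Circle.norm_coe, one_mul,
      integral_const, probReal_univ, one_smul, norm_zero] using (h_coeff n).norm
  | zero => simpa using tendsto_const_nhds
  | add k₁ k₂ _ _ h₁ h₂ =>
    have h_int (k : C(AddCircle T, ℂ)) (i : ι) :=
      ((integrable_continuousMap k).integrable_convolution (lsmul ℂ ℂ) (hF i)).norm
    have h_exists (k : C(AddCircle T, ℂ)) (i : ι) :=
      HasCompactSupport.convolutionExists_left (lsmul ℂ ℂ) (.of_compactSpace k) k.continuous
        (hF i).locallyIntegrable
    refine squeeze_zero (fun i => by positivity) (fun i => ?_) (by simpa using h₁.add h₂)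
    rw [← integral_add (h_int k₁ i) (h_int k₂ i), ContinuousMap.coe_add,
      (h_exists k₁ i).add_distrib (h_exists k₂ i)]
    exact integral_mono_of_nonneg (.of_forall fun x => norm_nonneg _)
      ((h_int k₁ i).add (h_int k₂ i)) (.of_forall fun x => norm_add_le _ _)
  | smul c k _ hk =>
    simpa [smul_convolution, norm_smul, integral_const_mul] using hk.const_mul ‖c‖

theorem tendsto_integral_norm_of_tendsto_fourierCoeff {u v : ℕ → AddCircle T → ℂ}
    (hu : Integrable (u 0) haarAddCircle) (hv : ∀ m, Integrable (v m) haarAddCircle)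
    (hv1 : ∀ m, ∫ x, ‖v m x‖ ∂haarAddCircle ≤ 1)
    (h_rec : ∀ m, u (m + 1) =ᵐ[haarAddCircle] u m ⋆[lsmul ℂ ℂ, haarAddCircle] v m)
    (h_coeff : ∀ n, Tendsto (fun m => fourierCoeff (u m) n) atTop (𝓝 0)) :
    Tendsto (fun m => ∫ x, ‖u m x‖ ∂haarAddCircle) atTop (𝓝 0) := by
  have hum := integrable_of_succ_ae_eq_convolution hu hv h_rec
  refine Metric.tendsto_nhds.2 fun ε hε => ?_
  obtain ⟨k, hk, hku⟩ :=
    exists_mem_integral_norm_sub_convolution_le dense_span_fourier hu (half_pos hε)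
  have h_conv := tendsto_integral_norm_convolution_of_mem_span hum h_coeff hk
  filter_upwards [h_conv.eventually_lt_const (half_pos hε)] with m hm
  have h_near := antitone_integral_norm_sub_convolution hu hv hv1 h_rec k (Nat.zero_le m)
  have h_triangle := integral_norm_sub_le_add (hum m)
    ((integrable_continuousMap k).integrable_convolution (lsmul ℂ ℂ) (hum m))
    (integrable_zero _ _ _)
  simp only [Pi.zero_apply, sub_zero] at h_triangle
  rw [Real.dist_0_eq_abs, abs_of_nonneg (by positivity)]
  linarith

section PartialProducts

variable {u v : ℕ → AddCircle T → ℂ} (hv : ∀ m, Integrable (v m) haarAddCircle)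
  (h_zero : u 0 = v 0) (h_rec : ∀ m, u (m + 1) = u m ⋆[lsmul ℂ ℂ, haarAddCircle] v (m + 1))

include hv h_zero h_rec

theorem fourierCoeff_eq_prod_range_succ (m : ℕ) (n : ℤ) :
    fourierCoeff (u m) n = ∏ i ∈ Finset.range (m + 1), fourierCoeff (v i) n := by
  have hu := integrable_of_succ_ae_eq_convolution (h_zero ▸ hv 0) (fun m => hv (m + 1))
    (fun m => (h_rec m).eventuallyEq)
  induction m with
  | zero => simp [h_zero]
  | succ m ih =>
    rw [h_rec, fourierCoeff_convolution (hu m) (hv _), ih, Finset.prod_range_succ _ (m + 1),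
      smul_eq_mul]

theorem tendsto_integral_norm_sub_one_iff (hv0 : ∀ m, ∫ x, v m x ∂haarAddCircle = 1)
    (hv1 : ∀ m, ∫ x, ‖v m x‖ ∂haarAddCircle ≤ 1) :
    Tendsto (fun m => ∫ x, ‖u m x - 1‖ ∂haarAddCircle) atTop (𝓝 0) ↔
      ∀ n ≠ 0, Tendsto (fun m => ∏ i ∈ Finset.range m, fourierCoeff (v i) n) atTop (𝓝 0) := by
  have hu := integrable_of_succ_ae_eq_convolution (h_zero ▸ hv 0) (fun m => hv (m + 1))
    (fun m => (h_rec m).eventuallyEq)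
  have h_one : Integrable (1 : AddCircle T → ℂ) haarAddCircle := integrable_const 1
  have h_coeff (n : ℤ) (m : ℕ) : fourierCoeff (u m - 1) n =
      if n = 0 then 0 else ∏ i ∈ Finset.range (m + 1), fourierCoeff (v i) n := by
    rw [fourierCoeff_sub (hu m) h_one, fourierCoeff_one,
      fourierCoeff_eq_prod_range_succ hv h_zero h_rec]
    split_ifs with hn
    · simp [hn, fourierCoeff_zero, hv0]
    · simp
  constructor
  · intro h_lim n hn
    refine (tendsto_add_atTop_iff_nat 1).1 (squeeze_zero_norm (fun m => ?_) h_lim)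
    have h_le := norm_fourierCoeff_le (u m - 1) n
    rwa [h_coeff, if_neg hn] at h_le
  · intro h_lim
    refine tendsto_integral_norm_of_tendsto_fourierCoeff (u := fun m => u m - 1)
      ((hu 0).sub h_one) (fun m => hv (m + 1)) (fun m => hv1 (m + 1)) (fun m => ?_) fun n => ?_
    · rw [h_rec]
      refine .trans ?_ (sub_convolution_ae_eq _ (hu m) h_one (hv _)).symm
      rw [one_lsmul_convolution, hv0]
      rfl
    · simp only [h_coeff]
      split_ifs with hn
      · exact tendsto_const_nhds
      · exact (tendsto_add_atTop_iff_nat 1).2 (h_lim n hn)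

end PartialProducts

end Circle

end Convolution

section CircleLift

open AddCircle ContinuousLinearMap
open scoped Convolution

/-- The function on the circle of length one induced by the restriction of `f` to `[0,1)`, taken
complex-valued so that Mathlib's `fourierCoeff` applies to it. -/
def circleLift (f : ℝ → ℝ) : UnitAddCircle → ℂ := liftIco 1 0 fun x => (f x : ℂ)

theorem circleLift_coe (f : ℝ → ℝ) (x : ℝ) :
    circleLift f (x : UnitAddCircle) = (f (Int.fract x) : ℂ) := by
  have h_mem : Int.fract x ∈ Set.Ico (0 : ℝ) (0 + 1) := by
    simp [Int.fract_nonneg, Int.fract_lt_one]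
  rw [← coe_fract, circleLift, liftIco_coe_apply h_mem]

theorem integral_comp_circleLift {E : Type*} [NormedAddCommGroup E] [NormedSpace ℝ E]
    (φ : UnitAddCircle → ℂ → E) (f : ℝ → ℝ) :
    ∫ t, φ t (circleLift f t) ∂haarAddCircle = ∫ x in (0 : ℝ)..1, φ x (f x) := by
  rw [integral_haarAddCircle, inv_one, one_smul, ← UnitAddCircle.intervalIntegral_preimage 0,
    zero_add]
  refine intervalIntegral.integral_congr_Ioo_of_le zero_le_one fun x hx => ?_
  simp only [circleLift_coe, Int.fract_eq_self.2 ⟨hx.1.le, hx.2⟩]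

theorem fourierCoeff_circleLift (f : ℝ → ℝ) (n : ℤ) :
    fourierCoeff (circleLift f) n = fourierCoeff01 f n := by
  rw [fourierCoeff, integral_comp_circleLift fun t z => fourier (-n) t • z, fourierCoeff01]
  congr! 2 with x
  rw [fourier_coe_apply, smul_eq_mul, mul_comm]
  congr 2
  push_cast
  ring

theorem circleLift_circConv (f g : ℝ → ℝ) :
    circleLift (circConv f g) =
      circleLift f ⋆[lsmul ℂ ℂ, haarAddCircle] circleLift g := by
  refine AddCircle.Ico_ext (p := (1 : ℝ)) 0 fun x hx => ?_
  rw [zero_add] at hx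
  rw [circleLift_coe, Int.fract_eq_self.2 hx, convolution_def,
    integral_comp_circleLift fun t z => lsmul ℂ ℂ z (circleLift g (x - t)), circConv,
    ← intervalIntegral.integral_ofReal]
  simp only [← coe_sub, circleLift_coe, lsmul_apply, smul_eq_mul, Complex.ofReal_mul]

theorem integrable_circleLift {f : ℝ → ℝ} (hf : IntegrableOn f (Set.Icc 0 1)) :
    Integrable (circleLift f) haarAddCircle := by
  have h_Ioc : MemLp (fun x => (f x : ℂ)) 1 (volume.restrict (Set.Ioc (0 : ℝ) (0 + 1))) := by
    rw [memLp_one_iff_integrable, zero_add]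
    exact (hf.mono_set Set.Ioc_subset_Icc_self).ofReal
  have h_ne : ∀ᵐ t : UnitAddCircle, t ≠ (0 : ℝ) := by
    simp [ae_iff, ← Metric.closedBall_zero, volume_closedBall]
  have h_lift : liftIoc 1 0 (fun x => (f x : ℂ)) =ᵐ[volume] circleLift f := by
    filter_upwards [h_ne] with t ht using liftIoc_eq_liftIco_of_ne ht
  exact memLp_one_iff_integrable.1 (h_Ioc.memLp_liftIoc.ae_eq h_lift).haarAddCircle

theorem IsProbDensity.comp_one_sub {g : ℝ → ℝ} (hg : IsProbDensity g) :
    IsProbDensity fun y => g (1 - y) := by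
  refine ⟨fun x => hg.1 _, ?_, ?_⟩
  · have h_int : IntervalIntegrable g volume 0 1 :=
      (intervalIntegrable_iff_integrableOn_Icc_of_le zero_le_one).2 hg.2.1
    rw [← intervalIntegrable_iff_integrableOn_Icc_of_le zero_le_one]
    simpa using (h_int.comp_sub_left 1).symm
  · simpa [intervalIntegral.integral_comp_sub_left g 1] using hg.2.2

theorem IsProbDensity.integral_circleLift {g : ℝ → ℝ} (hg : IsProbDensity g) :
    ∫ t, circleLift g t ∂haarAddCircle = 1 := by
  rw [integral_comp_circleLift fun _ z => z, intervalIntegral.integral_ofReal, hg.2.2,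
    Complex.ofReal_one]

theorem IsProbDensity.integral_norm_circleLift {g : ℝ → ℝ} (hg : IsProbDensity g) :
    ∫ t, ‖circleLift g t‖ ∂haarAddCircle = 1 := by
  rw [integral_comp_circleLift fun _ z => ‖z‖]
  simpa [abs_of_nonneg (hg.1 _)] using hg.2.2

theorem integral_norm_circleLift_sub_one (f : ℝ → ℝ) :
    ∫ t, ‖circleLift f t - 1‖ ∂haarAddCircle = ∫ x in (0 : ℝ)..1, |f x - 1| := by
  rw [integral_comp_circleLift fun _ z => ‖z - 1‖]
  simp_rw [← Complex.ofReal_one, ← Complex.ofReal_sub, Complex.norm_real, Real.norm_eq_abs]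

theorem fourierCoeff01_comp_one_sub (f : ℝ → ℝ) (n : ℤ) :
    fourierCoeff01 (fun y => f (1 - y)) n = starRingEnd ℂ (fourierCoeff01 f n) := by
  simp only [fourierCoeff01, ← intervalIntegral.intervalIntegral_conj]
  have h_reflect := intervalIntegral.integral_comp_sub_left (a := 0) (b := 1)
    (fun x : ℝ => starRingEnd ℂ ((f x : ℂ) *
      Complex.exp (-(2 * Real.pi * Complex.I) * n * x))) 1
  rw [sub_self, sub_zero] at h_reflect
  rw [← h_reflect]
  congr! 2 with x
  rw [map_mul, Complex.conj_ofReal, ← Complex.exp_conj]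
  congr 1
  refine Complex.exp_eq_exp_iff_exists_int.2 ⟨-n, ?_⟩
  simp only [map_mul, map_neg, map_sub, map_one, map_ofNat, map_intCast, Complex.conj_ofReal,
    Complex.conj_I, Complex.ofReal_sub, Complex.ofReal_one, Int.cast_neg]
  ring

theorem tendsto_integral_abs_sub_one_iff {g h : ℕ → ℝ → ℝ}
    (hg : ∀ m, 1 ≤ m → IsProbDensity (g m)) (h1 : h 1 = g 1)
    (h_rec : ∀ M, 1 ≤ M → h (M + 1) = circConv (h M) (g (M + 1))) :
    Tendsto (fun M => ∫ x in (0:ℝ)..1, |h M x - 1|) atTop (nhds 0) ↔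
      ∀ n : ℤ, n ≠ 0 →
        Tendsto (fun M => ∏ m ∈ Finset.Icc 1 M, fourierCoeff01 (g m) n) atTop (nhds 0) := by
  have hg' (m : ℕ) : IsProbDensity (g (m + 1)) := hg (m + 1) (by omega)
  have h_circle := tendsto_integral_norm_sub_one_iff
    (u := fun m => circleLift (h (m + 1))) (v := fun m => circleLift (g (m + 1)))
    (fun m => integrable_circleLift (hg' m).2.1) (congrArg circleLift h1)
    (fun m => by rw [h_rec _ (by omega), circleLift_circConv])
    (fun m => (hg' m).integral_circleLift) (fun m => (hg' m).integral_norm_circleLift.le)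
  simp only [integral_norm_circleLift_sub_one, fourierCoeff_circleLift] at h_circle
  have h_prod (M : ℕ) (n : ℤ) : ∏ i ∈ Finset.range M, fourierCoeff01 (g (i + 1)) n =
      ∏ m ∈ Finset.Icc 1 M, fourierCoeff01 (g m) n := by
    rw [Finset.range_eq_Ico, Finset.prod_Ico_add' (fun m => fourierCoeff01 (g m) n), zero_add,
      Finset.Ico_add_one_right_eq_Icc]
  rw [← tendsto_add_atTop_iff_nat 1]
  simpa only [h_prod] using h_circle

end CircleLift

/-- **Modulo 1 CLT with signs.** Let `η m ∈ {−1, +1}` be fixed signs and let `h M` be the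
density of `η₁Y₁ + ⋯ + η_M Y_M` mod 1, where the `Y m` are independent with densities
`g m` (the density of `−Y` mod 1 being `y ↦ g (1 − y)`).  Then `h M → 1` in `L¹([0,1])`
iff for every nonzero integer `n` the products `ĝ₁(n)⋯ĝ_M(n)` tend to `0`. -/
theorem modOneCLT_signs (g : ℕ → ℝ → ℝ) (hg : ∀ m, 1 ≤ m → IsProbDensity (g m))
    (η : ℕ → ℤ) (hη : ∀ m, η m = 1 ∨ η m = -1)
    (gg : ℕ → ℝ → ℝ)
    (hgg : ∀ m, gg m = if η m = 1 then g m else fun y => g m (1 - y))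
    (h : ℕ → ℝ → ℝ) (h1 : h 1 = gg 1)
    (hrec : ∀ M, 1 ≤ M → h (M + 1) = circConv (h M) (gg (M + 1))) :
    Tendsto (fun M => ∫ x in (0:ℝ)..1, |h M x - 1|) atTop (nhds 0) ↔
      ∀ n : ℤ, n ≠ 0 →
        Tendsto (fun M => ∏ m ∈ Finset.Icc 1 M, fourierCoeff01 (g m) n) atTop (nhds 0) := by
  have h_dens (m : ℕ) (hm : 1 ≤ m) : IsProbDensity (gg m) := by
    rw [hgg]
    split_ifs
    exacts [hg m hm, (hg m hm).comp_one_sub]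
  have h_norm (m : ℕ) (n : ℤ) : ‖fourierCoeff01 (gg m) n‖ = ‖fourierCoeff01 (g m) n‖ := by
    rw [hgg]
    split_ifs
    · rfl
    · rw [fourierCoeff01_comp_one_sub, RCLike.norm_conj]
  rw [tendsto_integral_abs_sub_one_iff h_dens h1 hrec]
  refine forall₂_congr fun n _ => ?_
  rw [tendsto_zero_iff_norm_tendsto_zero]
  simp only [norm_prod, h_norm]
  simp only [← norm_prod, ← tendsto_zero_iff_norm_tendsto_zero]

end
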